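/- Let κ ∈ ℤ_{>0} ∪ {∞} and let n, r be integers with n > 0 and 0 ≤ r ≤ nκ. Then lim_{s→∞} (1/s) ln (sn choose sr)_κ = n·H^max_κ(r/n). -/

import Mathlib

open Real Filter Finset

noncomputable section

/-- `ω(n) = n^n / n!`. -/
def omegaFn (n : ℕ) : ℝ := (n : ℝ) ^ n / (n.factorial : ℝ)

/-- `Ω(V)`: the sum of `ω(v)` over the entries of a vector `V`. -/
def OmegaVec {I : Type*} [Fintype I] (V : I → ℕ) : ℝ := ∑ i, omegaFn (V i)

/-- `Ω(K)`: the sum of `ω(k)` over the entries of a matrix `K`. -/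
def OmegaMat {I J : Type*} [Fintype I] [Fintype J] (K : I → J → ℕ) : ℝ :=
  ∑ i, ∑ j, omegaFn (K i j)

/-- `T_K(R,C)`: the number of nonnegative-integer matrices with row sums `R`,
column sums `C`, and entries bounded by `K` (a bound of `⊤` means unbounded). -/
def tableCount {I J : Type*} [Fintype I] [Fintype J]
    (K : I → J → ℕ∞) (R : I → ℕ) (C : J → ℕ) : ℕ :=
  Set.ncard {A : I → J → ℕ |
    (∀ i, ∑ j, A i j = R i) ∧ (∀ j, ∑ i, A i j = C j) ∧ ∀ i j, (A i j : ℕ∞) ≤ K i j}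

/-- The `s`-fold cloning of a margin vector. -/
def cloneVec {m : ℕ} (s : ℕ) (R : Fin m → ℕ) : Fin s × Fin m → ℕ :=
  fun p => s * R p.2

/-- The `s`-fold cloning of a bound matrix. -/
def cloneMat {m n : ℕ} (s : ℕ) (K : Fin m → Fin n → ℕ∞) :
    Fin s × Fin m → Fin s × Fin n → ℕ∞ :=
  fun p q => K p.2 q.2

/-- The mean of the truncated geometric distribution on `{0,…,κ}` with ratio `q`. -/
def tgMean (κ : ℕ∞) (q : ℝ) : ℝ :=
  if κ = ⊤ then q / (1 - q)
  else (∑ t ∈ Finset.range (κ.toNat + 1), (t : ℝ) * q ^ t) /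
    (∑ t ∈ Finset.range (κ.toNat + 1), q ^ t)

/-- The parameter `q(x;κ)` of the truncated geometric distribution `TG(x;κ)` with mean `x`. -/
def tgQ (κ : ℕ∞) (x : ℝ) : ℝ := sInf {q : ℝ | 0 ≤ q ∧ x ≤ tgMean κ q}

/-- The parameter `p(x;κ)` of the truncated geometric distribution `TG(x;κ)` with mean `x`. -/
def tgP (κ : ℕ∞) (x : ℝ) : ℝ :=
  if κ = ⊤ then 1 - tgQ κ x
  else (∑ t ∈ Finset.range (κ.toNat + 1), tgQ κ x ^ t)⁻¹

/-- The probability mass function of `TG(x;κ)`: `Pr[X=t] = p q^t` for `t ∈ {0,…,κ}`. -/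
def tgPMF (κ : ℕ∞) (x : ℝ) (t : ℕ) : ℝ :=
  if (t : ℕ∞) ≤ κ then tgP κ x * tgQ κ x ^ t else 0

/-- `H^max_κ(x)`: the (base-e) entropy of the truncated geometric distribution `TG(x;κ)`. -/
def Hmax (κ : ℕ∞) (x : ℝ) : ℝ := -∑' t : ℕ, tgPMF κ x t * Real.log (tgPMF κ x t)

/-- The `(κ+1)`-nomial coefficient `(n choose r)_κ`: the coefficient of `x^r` in
`(1+x+⋯+x^κ)^n`; for `κ = ∞` it is `(r+n-1).choose r`. -/
def knomial (κ : ℕ∞) (n r : ℕ) : ℕ :=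
  if κ = ⊤ then (r + n - 1).choose r
  else ((∑ t ∈ Finset.range (κ.toNat + 1), (Polynomial.X : Polynomial ℕ) ^ t) ^ n).coeff r

/-- The independence-heuristic estimate `I_κ(R,C)`. -/
def indepEst (κ : ℕ∞) {I J : Type*} [Fintype I] [Fintype J] (R : I → ℕ) (C : J → ℕ) : ℝ :=
  ((knomial κ (Fintype.card I * Fintype.card J) (∑ i, R i) : ℝ))⁻¹ *
    (∏ i, (knomial κ (Fintype.card J) (R i) : ℝ)) *
    ∏ j, (knomial κ (Fintype.card I) (C j) : ℝ)

/-- The transportation polytope `Π_κ(R,C)` of real matrices with entries in `[0,κ]`,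
row sums `R` and column sums `C`. -/
def transportPolytope (κ : ℕ∞) {m n : ℕ} (R : Fin m → ℕ) (C : Fin n → ℕ) :
    Set (Fin m → Fin n → ℝ) :=
  {Z | (∀ i j, 0 ≤ Z i j) ∧ (∀ i j, κ ≠ ⊤ → Z i j ≤ (κ.toNat : ℝ)) ∧
    (∀ i, ∑ j, Z i j = (R i : ℝ)) ∧ ∀ j, ∑ i, Z i j = (C j : ℝ)}

/-- The generating function `G(x,y) = ∏_{i,j} (1 + x_i y_j + ⋯ + (x_i y_j)^{k_{ij}})`. -/
def genFun {m n : ℕ} (K : Fin m → Fin n → ℕ) (x : Fin m → ℝ) (y : Fin n → ℝ) : ℝ :=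
  ∏ i, ∏ j, ∑ t ∈ Finset.range (K i j + 1), (x i * y j) ^ t

/-- The monomial `x^R = ∏_i x_i^{r_i}`. -/
def monom {m : ℕ} (x : Fin m → ℝ) (R : Fin m → ℕ) : ℝ := ∏ i, x i ^ R i

/-- The concave roof function `f_K(R,C)`: the supremum of `∑_t α_t ln T_K(R^t,C^t)` over
convex combinations of integer margins averaging to `(R,C)` (and `⊥ = -∞` if none exist). -/
def fK {m n : ℕ} (K : Fin m → Fin n → ℕ) (R : Fin m → ℝ) (C : Fin n → ℝ) : EReal :=
  sSup {v : EReal | ∃ (p : ℕ) (α : Fin p → ℝ)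
    (Rs : Fin p → Fin m → ℕ) (Cs : Fin p → Fin n → ℕ),
    1 ≤ p ∧ (∀ t, 0 ≤ α t) ∧ ∑ t, α t = 1 ∧
    (∀ i, ∑ t, α t * (Rs t i : ℝ) = R i) ∧ (∀ j, ∑ t, α t * (Cs t j : ℝ) = C j) ∧
    (∀ t, 0 < tableCount (fun i j => (K i j : ℕ∞)) (Rs t) (Cs t)) ∧
    v = ((∑ t, α t * Real.log (tableCount (fun i j => (K i j : ℕ∞)) (Rs t) (Cs t)) : ℝ) : EReal)}

/-- `e^x` for an extended real `x`, with `e^{-∞} = 0`. -/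
def expE (e : EReal) : ℝ := if e = ⊥ then 0 else Real.exp e.toReal

end

/-!
Let `κ = k` be finite and `P = 1 + X + ⋯ + X ^ k`. For the ratio `q` of the truncated geometric law
of mean `r / n`, the tilted polynomial `P(qX) / P(q)` is the probability generating function of
that law, so its `sn`-th power is the law of a sum of `sn` independent copies and the coefficient
of `X ^ (sr)` is the probability that this sum equals its mean. Tilting accounts for the factor
`P(q) ^ (sn) / q ^ (sr)`, whose logarithm is `s n H(r / n)`, so it remains to see that this
probability is `exp (-o(s))`. By Chebyshev's inequality and the pigeonhole principle, the sum of
`(s - u) n` of the copies takes some value within `u` of its mean with probability at least of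
order `1 / s` once `u` is a large multiple of `√s`; the other `un` copies then correct the sum to
exactly `sr`, at a cost `δ ^ (un)` which is exponential only in `√s`. At the endpoints `r = 0` and
`r = nk` both sides vanish.

The case `κ = ∞` reduces to the polynomial `1 + X`, since the number of multisets is
`n / (n + r)` times the binomial coefficient `n + r` choose `r`.
-/

section Polynomial

open Polynomial

lemma coeff_nonneg_of_forall_le_natDegree {R : Type*} [Semiring R] [PartialOrder R] {P : R[X]}
    (hP : ∀ t ≤ P.natDegree, 0 ≤ P.coeff t) (i : ℕ) : 0 ≤ P.coeff i := by
  rcases le_or_gt i P.natDegree with hi | hi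
  · exact hP i hi
  · rw [coeff_eq_zero_of_natDegree_lt hi]

section OrderedSemiring

variable {R : Type*} [Semiring R] [PartialOrder R] [IsOrderedRing R]

lemma coeff_mul_coeff_le_coeff_mul {P Q : R[X]} (hP : ∀ i, 0 ≤ P.coeff i)
    (hQ : ∀ j, 0 ≤ Q.coeff j) (i j : ℕ) :
    P.coeff i * Q.coeff j ≤ (P * Q).coeff (i + j) := by
  rw [coeff_mul]
  exact single_le_sum (f := fun x : ℕ × ℕ => P.coeff x.1 * Q.coeff x.2)
    (fun x _ => mul_nonneg (hP x.1) (hQ x.2)) (mem_antidiagonal.2 (rfl : (i, j).1 + (i, j).2 = _))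

lemma coeff_pow_nonneg {P : R[X]} (hP : ∀ i, 0 ≤ P.coeff i) (N j : ℕ) :
    0 ≤ (P ^ N).coeff j := by
  induction N generalizing j with
  | zero => rw [pow_zero, coeff_one]; split_ifs <;> simp
  | succ N ih =>
    rw [pow_succ, coeff_mul]
    exact sum_nonneg fun x _ => mul_nonneg (ih x.1) (hP x.2)

lemma pow_le_coeff_pow {P : R[X]} {δ : R} (hδ : 0 ≤ δ) (hP : ∀ t ≤ P.natDegree, δ ≤ P.coeff t)
    {N j : ℕ} (hj : j ≤ N * P.natDegree) : δ ^ N ≤ (P ^ N).coeff j := by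
  have hnonneg := coeff_nonneg_of_forall_le_natDegree fun t ht => hδ.trans (hP t ht)
  induction N generalizing j with
  | zero =>
    obtain rfl : j = 0 := by lia
    simp
  | succ N ih =>
    rw [add_mul, one_mul] at hj
    set t := min j P.natDegree
    calc δ ^ (N + 1) = δ ^ N * δ := pow_succ δ N
      _ ≤ (P ^ N).coeff (j - t) * P.coeff t :=
        mul_le_mul (ih (by lia)) (hP t (min_le_right _ _)) hδ (coeff_pow_nonneg hnonneg _ _)
      _ ≤ (P ^ N * P).coeff (j - t + t) :=
        coeff_mul_coeff_le_coeff_mul (coeff_pow_nonneg hnonneg N) hnonneg _ _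
      _ = (P ^ (N + 1)).coeff j := by rw [← pow_succ, Nat.sub_add_cancel (min_le_left _ _)]

lemma coeff_pow_mul_pow_le {P : R[X]} {δ : R} (hδ : 0 ≤ δ)
    (hP : ∀ t ≤ P.natDegree, δ ≤ P.coeff t) (N j : ℕ) {M i : ℕ} (hi : i ≤ M * P.natDegree) :
    (P ^ N).coeff j * δ ^ M ≤ (P ^ (N + M)).coeff (j + i) := by
  have hnonneg := coeff_nonneg_of_forall_le_natDegree fun t ht => hδ.trans (hP t ht)
  calc (P ^ N).coeff j * δ ^ M ≤ (P ^ N).coeff j * (P ^ M).coeff i :=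
        mul_le_mul_of_nonneg_left (pow_le_coeff_pow hδ hP hi) (coeff_pow_nonneg hnonneg N j)
    _ ≤ (P ^ N * P ^ M).coeff (j + i) :=
        coeff_mul_coeff_le_coeff_mul (coeff_pow_nonneg hnonneg N) (coeff_pow_nonneg hnonneg M) j i
    _ = (P ^ (N + M)).coeff (j + i) := by rw [pow_add]

lemma coeff_le_eval_one {P : R[X]} (hP : ∀ i, 0 ≤ P.coeff i) (j : ℕ) :
    P.coeff j ≤ P.eval 1 := by
  rcases eq_or_ne (P.coeff j) 0 with hj | hj
  · rw [hj, eval_eq_sum_range]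
    exact sum_nonneg fun i _ => by simpa using hP i
  · simp only [eval_eq_sum, sum_def, one_pow, mul_one]
    exact single_le_sum (fun i _ => hP i) (mem_support_iff.2 hj)

end OrderedSemiring

lemma exists_pos_forall_le_coeff {P : ℝ[X]} (hP : ∀ t ≤ P.natDegree, 0 < P.coeff t) :
    ∃ δ > 0, ∀ t ≤ P.natDegree, δ ≤ P.coeff t := by
  obtain ⟨m, hm, hmin⟩ :=
    exists_min_image (range (P.natDegree + 1)) P.coeff nonempty_range_add_one
  exact ⟨P.coeff m, hP m (mem_range_succ_iff.1 hm), fun t ht => hmin t (mem_range_succ_iff.2 ht)⟩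

lemma coeff_pow_pos {P : ℝ[X]} (hP : ∀ t ≤ P.natDegree, 0 < P.coeff t) {N j : ℕ}
    (hj : j ≤ N * P.natDegree) : 0 < (P ^ N).coeff j := by
  obtain ⟨δ, hδ, hδP⟩ := exists_pos_forall_le_coeff hP
  exact (pow_pos hδ N).trans_le (pow_le_coeff_pow hδ.le hδP hj)

/-- The variance of an `ℕ`-valued random variable with probability generating function `P`;
its mean is `P'(1)`. -/
noncomputable def pgfVariance (P : ℝ[X]) : ℝ :=
  (derivative (derivative P)).eval 1 + (derivative P).eval 1 - (derivative P).eval 1 ^ 2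

lemma eval_one_derivative_pow {P : ℝ[X]} (hP : P.eval 1 = 1) (N : ℕ) :
    (derivative (P ^ N)).eval 1 = N * (derivative P).eval 1 := by
  simp [derivative_pow, hP]

lemma pgfVariance_pow {P : ℝ[X]} (hP : P.eval 1 = 1) (N : ℕ) :
    pgfVariance (P ^ N) = N * pgfVariance P := by
  rcases N with _ | N
  · simp [pgfVariance]
  · simp only [pgfVariance, derivative_pow, derivative_mul, derivative_C, Nat.add_sub_cancel,
      eval_add, eval_mul, eval_pow, eval_C, eval_zero, hP, one_pow, mul_one, zero_add,
      Nat.cast_add, Nat.cast_one]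
    ring

lemma sum_coeff_mul_sub_sq {P : ℝ[X]} (hP : P.eval 1 = 1) :
    ∑ j ∈ P.support, P.coeff j * ((j : ℝ) - (derivative P).eval 1) ^ 2 = pgfVariance P := by
  set μ := (derivative P).eval 1 with hμ
  have h0 : ∑ j ∈ P.support, P.coeff j = 1 := by
    simpa [eval_eq_sum, sum_def] using hP
  have h1 : ∑ j ∈ P.support, P.coeff j * j = μ := by
    simp [hμ, derivative_eval, sum_def]
  have h2 : ∑ j ∈ P.support, P.coeff j * (j * (j - 1)) = (derivative (derivative P)).eval 1 := by
    conv_rhs => rw [P.as_sum_support]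
    simp only [derivative_sum, derivative_monomial, eval_finsetSum, eval_monomial, one_pow, mul_one]
    refine sum_congr rfl fun j _ => ?_
    cases j <;> push_cast <;> simp [mul_assoc]
  calc ∑ j ∈ P.support, P.coeff j * ((j : ℝ) - μ) ^ 2
      = ∑ j ∈ P.support, (P.coeff j * (j * (j - 1)) + (1 - 2 * μ) * (P.coeff j * j)
          + μ ^ 2 * P.coeff j) := sum_congr rfl fun j _ => by ring
    _ = (derivative (derivative P)).eval 1 + (1 - 2 * μ) * μ + μ ^ 2 * 1 := by
        rw [sum_add_distrib, sum_add_distrib, ← mul_sum, ← mul_sum, h0, h1, h2]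
    _ = pgfVariance P := by rw [pgfVariance]; ring

lemma pgfVariance_nonneg {P : ℝ[X]} (hP : ∀ i, 0 ≤ P.coeff i) (h1 : P.eval 1 = 1) :
    0 ≤ pgfVariance P := by
  rw [← sum_coeff_mul_sub_sq h1]
  exact sum_nonneg fun j _ => mul_nonneg (hP j) (sq_nonneg _)

-- Averaging `w i * (1 - (f i - μ) ^ 2 / c ^ 2)` does Chebyshev and the pigeonhole in one go.
lemma exists_large_weight_near {ι : Type*} {s : Finset ι} {w f : ι → ℝ} {μ c : ℝ}
    (hw : ∀ i ∈ s, 0 ≤ w i) (hsum : ∑ i ∈ s, w i = 1) (hc : 0 < c)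
    (hvar : 2 * ∑ i ∈ s, w i * (f i - μ) ^ 2 ≤ c ^ 2) :
    ∃ i ∈ s, |f i - μ| ≤ c ∧ 1 ≤ 2 * #s * w i := by
  have hs : s.Nonempty := nonempty_of_sum_ne_zero (hsum.trans_ne one_ne_zero)
  have hcard : (0 : ℝ) < #s := by exact_mod_cast hs.card_pos
  have havg : ∑ _i ∈ s, c ^ 2 / (2 * #s) ≤ ∑ i ∈ s, w i * (c ^ 2 - (f i - μ) ^ 2) := by
    simp only [mul_sub, sum_sub_distrib, ← sum_mul, hsum, sum_const, nsmul_eq_mul]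
    have : (#s : ℝ) * (c ^ 2 / (2 * #s)) = c ^ 2 / 2 := by field_simp
    linarith
  obtain ⟨i, hi, hle⟩ := exists_le_of_sum_le hs havg
  have hpos : 0 < w i * (c ^ 2 - (f i - μ) ^ 2) := lt_of_lt_of_le (by positivity) hle
  have hdev : 0 < c ^ 2 - (f i - μ) ^ 2 := pos_of_mul_pos_right hpos (hw i hi)
  refine ⟨i, hi, abs_le_of_sq_le_sq (by linarith) hc.le, ?_⟩
  have hmass : c ^ 2 / (2 * #s) ≤ w i * c ^ 2 :=
    hle.trans (mul_le_mul_of_nonneg_left (by linarith [sq_nonneg (f i - μ)]) (hw i hi))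
  rw [div_le_iff₀ (mul_pos two_pos hcard)] at hmass
  exact le_of_mul_le_mul_right (by linarith) (pow_pos hc 2)

lemma exists_large_coeff_near_mean {P : ℝ[X]} (hP : ∀ i, 0 ≤ P.coeff i) (h1 : P.eval 1 = 1)
    {c : ℝ} (hc : 0 < c) (hvar : 2 * pgfVariance P ≤ c ^ 2) :
    ∃ j : ℕ, |(j : ℝ) - (derivative P).eval 1| ≤ c ∧ 1 ≤ 2 * (P.natDegree + 1) * P.coeff j := by
  obtain ⟨j, -, hdev, hmass⟩ := exists_large_weight_near (s := P.support) (w := P.coeff)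
    (f := fun j => (j : ℝ)) (fun j _ => hP j) (by simpa [eval_eq_sum, sum_def] using h1) hc
    (by rwa [sum_coeff_mul_sub_sq h1])
  have hcard : (#P.support : ℝ) ≤ P.natDegree + 1 := by
    exact_mod_cast card_supp_le_succ_natDegree P
  have hPj := hP j
  exact ⟨j, hdev, hmass.trans (by gcongr)⟩

lemma exists_large_coeff_pow_near_mean {P : ℝ[X]} (hP : ∀ i, 0 ≤ P.coeff i) (h1 : P.eval 1 = 1)
    {N : ℕ} {c : ℝ} (hc : 0 < c) (hvar : 2 * (N * pgfVariance P) ≤ c ^ 2) :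
    ∃ j : ℕ, |(j : ℝ) - N * (derivative P).eval 1| ≤ c ∧
      1 ≤ 2 * (N * P.natDegree + 1) * (P ^ N).coeff j := by
  obtain ⟨j, hdev, hmass⟩ := exists_large_coeff_near_mean (coeff_pow_nonneg hP N)
    (by rw [eval_pow, h1, one_pow]) hc (by rwa [pgfVariance_pow h1])
  rw [eval_one_derivative_pow h1] at hdev
  exact ⟨j, hdev, by simpa [natDegree_pow] using hmass⟩

lemma exists_add_eq_mul_of_abs_sub_le {j m r u d : ℕ} (hr : 0 < r) (hrd : r < d)
    (hj : |(j : ℝ) - m * r| ≤ u) : ∃ i ≤ u * d, j + i = (m + u) * r := by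
  rw [abs_le] at hj
  have hj_le : j ≤ m * r + u := by
    have : (j : ℝ) ≤ (m * r + u : ℕ) := by push_cast; linarith
    exact_mod_cast this
  have hj_ge : m * r ≤ j + u := by
    have : ((m * r : ℕ) : ℝ) ≤ (j + u : ℕ) := by push_cast; linarith
    exact_mod_cast this
  have hur : u ≤ u * r := Nat.le_mul_of_pos_right u hr
  have hud : u * r + u ≤ u * d := Nat.mul_le_mul_left u hrd
  exact ⟨(m + u) * r - j, by rw [add_mul]; lia, by rw [add_mul]; lia⟩

-- Of the `s * n` factors, `(s - u) * n` produce some exponent `j` within `u` of its mean with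
-- weight at least of order `1 / s`; the remaining `u * n` factors correct `j` to exactly `s * r`.
lemma pow_le_mul_coeff_pow {P : ℝ[X]} {δ : ℝ} (hδ : 0 ≤ δ)
    (hP : ∀ t ≤ P.natDegree, δ ≤ P.coeff t) (h1 : P.eval 1 = 1) {n r s u : ℕ}
    (hr : 0 < r) (hrn : r < n * P.natDegree) (hmean : n * (derivative P).eval 1 = r)
    (hu : 0 < u) (hus : u ≤ s) (hvar : 2 * (s * n * pgfVariance P) ≤ (u : ℝ) ^ 2) :
    δ ^ (u * n) ≤ s * (2 * (n * P.natDegree + 1)) * (P ^ (s * n)).coeff (s * r) := by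
  have hnonneg := coeff_nonneg_of_forall_le_natDegree fun t ht => hδ.trans (hP t ht)
  have hV := pgfVariance_nonneg hnonneg h1
  obtain ⟨m, rfl⟩ : ∃ m, s = m + u := ⟨s - u, by lia⟩
  obtain ⟨j, hdev, hmass⟩ := exists_large_coeff_pow_near_mean (N := m * n) hnonneg h1
    (Nat.cast_pos.2 hu) (le_trans (by push_cast; gcongr; linarith) hvar)
  have hmeanN : ((m * n : ℕ) : ℝ) * (derivative P).eval 1 = m * r := by
    rw [← hmean]; push_cast; ring
  rw [hmeanN] at hdev
  obtain ⟨i, hi, hij⟩ := exists_add_eq_mul_of_abs_sub_le hr hrn hdev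
  have hcoeff : (P ^ (m * n)).coeff j * δ ^ (u * n) ≤
      (P ^ ((m + u) * n)).coeff ((m + u) * r) := by
    rw [← hij, add_mul]
    exact coeff_pow_mul_pow_le hδ hP _ j (by rwa [mul_assoc])
  have hwidth : ((m * n : ℕ) : ℝ) * P.natDegree + 1 ≤ (m + u : ℕ) * (n * P.natDegree + 1) := by
    have : m * n * P.natDegree + 1 ≤ (m + u) * (n * P.natDegree + 1) := by nlinarith
    exact_mod_cast this
  have hPj := coeff_pow_nonneg hnonneg (m * n) j
  calc δ ^ (u * n)
      ≤ 2 * ((m * n : ℕ) * P.natDegree + 1) * (P ^ (m * n)).coeff j * δ ^ (u * n) :=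
        le_mul_of_one_le_left (pow_nonneg hδ _) hmass
    _ ≤ 2 * ((m + u : ℕ) * (n * P.natDegree + 1)) * (P ^ (m * n)).coeff j * δ ^ (u * n) := by
        gcongr
    _ = (m + u : ℕ) * (2 * (n * P.natDegree + 1)) * ((P ^ (m * n)).coeff j * δ ^ (u * n)) := by
        ring
    _ ≤ (m + u : ℕ) * (2 * (n * P.natDegree + 1)) * (P ^ ((m + u) * n)).coeff ((m + u) * r) := by
        gcongr

lemma tendsto_natCeil_mul_sqrt_div_atTop {C : ℝ} (hC : 0 ≤ C) :
    Tendsto (fun s : ℕ => (⌈C * √s⌉₊ : ℝ) / s) atTop (nhds 0) := by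
  have hsqrt : Tendsto (fun s : ℕ => √(s : ℝ)) atTop atTop :=
    tendsto_sqrt_atTop.comp tendsto_natCast_atTop_atTop
  have h := ((tendsto_nat_ceil_mul_div_atTop hC).comp hsqrt).mul hsqrt.inv_tendsto_atTop
  rw [mul_zero] at h
  refine h.congr fun s => ?_
  simp only [Function.comp_apply, Pi.inv_apply, ← div_eq_mul_inv, div_div,
    mul_self_sqrt (Nat.cast_nonneg s)]

lemma tendsto_log_natCast_div_atTop : Tendsto (fun s : ℕ => log s / s) atTop (nhds 0) :=
  (isLittleO_log_id_atTop.tendsto_div_nhds_zero).comp tendsto_natCast_atTop_atTop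

lemma le_one_div_mul_log_coeff_pow {P : ℝ[X]} {δ : ℝ} (hδ : 0 < δ)
    (hP : ∀ t ≤ P.natDegree, δ ≤ P.coeff t) (h1 : P.eval 1 = 1) {n r s u : ℕ}
    (hr : 0 < r) (hrn : r < n * P.natDegree) (hmean : n * (derivative P).eval 1 = r)
    (hu : 0 < u) (hus : u ≤ s) (hvar : 2 * (s * n * pgfVariance P) ≤ (u : ℝ) ^ 2) :
    (u : ℝ) / s * (n * log δ) - (log s / s + log (2 * (n * P.natDegree + 1)) * (1 / s)) ≤
      1 / s * log ((P ^ (s * n)).coeff (s * r)) := by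
  have hs : (0 : ℝ) < s := by exact_mod_cast hu.trans_le hus
  have hA : 0 < (P ^ (s * n)).coeff (s * r) :=
    coeff_pow_pos (fun t ht => hδ.trans_le (hP t ht))
      (by rw [mul_assoc]; exact Nat.mul_le_mul_left s hrn.le)
  have hlog := log_le_log (pow_pos hδ _) (pow_le_mul_coeff_pow hδ.le hP h1 hr hrn hmean hu hus hvar)
  rw [log_pow, log_mul (by positivity) hA.ne', log_mul hs.ne' (by positivity)] at hlog
  push_cast at hlog
  calc (u : ℝ) / s * (n * log δ) - (log s / s + log (2 * (n * P.natDegree + 1)) * (1 / s))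
      = 1 / s * (u * n * log δ - (log s + log (2 * (n * P.natDegree + 1)))) := by ring
    _ ≤ 1 / s * log ((P ^ (s * n)).coeff (s * r)) := by gcongr; linarith

lemma tendsto_log_coeff_pow_of_mean {P : ℝ[X]} (hP : ∀ t ≤ P.natDegree, 0 < P.coeff t)
    (h1 : P.eval 1 = 1) {n r : ℕ} (hr : 0 < r) (hrn : r < n * P.natDegree)
    (hmean : n * (derivative P).eval 1 = r) :
    Tendsto (fun s : ℕ => 1 / (s : ℝ) * log ((P ^ (s * n)).coeff (s * r))) atTop (nhds 0) := by
  obtain ⟨δ, hδ, hδP⟩ := exists_pos_forall_le_coeff hP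
  have hnonneg := coeff_nonneg_of_forall_le_natDegree fun t ht => (hP t ht).le
  have hV := pgfVariance_nonneg hnonneg h1
  set C : ℝ := 2 * (n * pgfVariance P) + 1 with hC
  have hC1 : 1 ≤ C := by rw [hC, le_add_iff_nonneg_left]; positivity
  set u : ℕ → ℕ := fun s => ⌈C * √s⌉₊
  have hu0 : Tendsto (fun s : ℕ => (u s : ℝ) / s) atTop (nhds 0) :=
    tendsto_natCeil_mul_sqrt_div_atTop (zero_le_one.trans hC1)
  have hlower : Tendsto (fun s : ℕ => (u s : ℝ) / s * (n * log δ) -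
      (log s / s + log (2 * (n * P.natDegree + 1)) * (1 / s))) atTop (nhds 0) := by
    simpa using (hu0.mul_const (n * log δ)).sub (tendsto_log_natCast_div_atTop.add
      (tendsto_one_div_atTop_nhds_zero_nat.const_mul (log (2 * (n * P.natDegree + 1)))))
  refine tendsto_of_tendsto_of_tendsto_of_le_of_le' hlower tendsto_const_nhds ?_ ?_
  · filter_upwards [eventually_gt_atTop 0, hu0.eventually_le_const zero_lt_one] with s hs hus
    have hs0 : (0 : ℝ) < s := by exact_mod_cast hs
    have husq : C * s ≤ (u s : ℝ) ^ 2 :=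
      calc C * s ≤ C ^ 2 * s := by gcongr; nlinarith
        _ = (C * √s) ^ 2 := by rw [mul_pow, sq_sqrt hs0.le]
        _ ≤ (u s : ℝ) ^ 2 := by gcongr; exact Nat.le_ceil _
    exact le_one_div_mul_log_coeff_pow hδ hδP h1 hr hrn hmean (Nat.ceil_pos.2 (by positivity))
      (by exact_mod_cast (div_le_one hs0).1 hus) (by rw [hC] at husq; linarith)
  · refine Eventually.of_forall fun s => mul_nonpos_of_nonneg_of_nonpos (by positivity) ?_
    have hpow := coeff_pow_nonneg hnonneg (s * n)
    refine log_nonpos (hpow _) ((coeff_le_eval_one hpow _).trans_eq ?_)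
    rw [eval_pow, h1, one_pow]

/-- The exponential tilt of `P` by the factor `q`: the normalization of `P(qX)` to total
mass `1`. -/
noncomputable def tilt (P : ℝ[X]) (q : ℝ) : ℝ[X] := C (P.eval q)⁻¹ * P.comp (C q * X)

lemma coeff_tilt_pow (P : ℝ[X]) (q : ℝ) (N j : ℕ) :
    (tilt P q ^ N).coeff j = (P ^ N).coeff j * q ^ j / P.eval q ^ N := by
  rw [tilt, mul_pow, ← C_pow, ← pow_comp, coeff_C_mul, comp_C_mul_X_coeff, inv_pow]
  ring

lemma coeff_tilt (P : ℝ[X]) (q : ℝ) (j : ℕ) :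
    (tilt P q).coeff j = P.coeff j * q ^ j / P.eval q := by
  simpa using coeff_tilt_pow P q 1 j

lemma natDegree_tilt {P : ℝ[X]} {q : ℝ} (hq : q ≠ 0) (hP : P.eval q ≠ 0) :
    (tilt P q).natDegree = P.natDegree := by
  rw [tilt, natDegree_C_mul (inv_ne_zero hP), natDegree_comp, natDegree_C_mul_X q hq, mul_one]

lemma eval_one_tilt {P : ℝ[X]} {q : ℝ} (hP : P.eval q ≠ 0) : (tilt P q).eval 1 = 1 := by
  simp [tilt, hP]

lemma eval_one_derivative_tilt (P : ℝ[X]) (q : ℝ) :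
    (derivative (tilt P q)).eval 1 = q * (derivative P).eval q / P.eval q := by
  simp only [tilt, derivative_mul, derivative_C, zero_mul, derivative_comp, derivative_X, mul_one,
    zero_add, eval_mul, eval_C, eval_comp, eval_X]
  ring

lemma eval_pos_of_forall_coeff_pos {P : ℝ[X]} (hP : ∀ t ≤ P.natDegree, 0 < P.coeff t) {q : ℝ}
    (hq : 0 ≤ q) : 0 < P.eval q := by
  rw [eval_eq_sum_range]
  refine sum_pos' (fun t ht => ?_) ⟨0, by simp, by simpa using hP 0 (Nat.zero_le _)⟩
  exact mul_nonneg (hP t (mem_range_succ_iff.1 ht)).le (pow_nonneg hq t)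

theorem tendsto_log_coeff_pow {P : ℝ[X]} (hP : ∀ t ≤ P.natDegree, 0 < P.coeff t) {n r : ℕ}
    (hr : 0 < r) (hrn : r < n * P.natDegree) {q : ℝ} (hq : 0 < q)
    (hmean : n * (q * (derivative P).eval q) = r * P.eval q) :
    Tendsto (fun s : ℕ => 1 / (s : ℝ) * log ((P ^ (s * n)).coeff (s * r))) atTop
      (nhds (n * log (P.eval q) - r * log q)) := by
  have hE : 0 < P.eval q := eval_pos_of_forall_coeff_pos hP hq.le
  have hdeg := natDegree_tilt hq.ne' hE.ne'
  have htilt := tendsto_log_coeff_pow_of_mean (P := tilt P q) (n := n) (r := r)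
    (fun t ht => by
      rw [coeff_tilt]
      exact div_pos (mul_pos (hP t (hdeg ▸ ht)) (pow_pos hq t)) hE)
    (eval_one_tilt hE.ne') hr (hdeg ▸ hrn)
    (by rw [eval_one_derivative_tilt, ← mul_div_assoc, hmean, mul_div_cancel_right₀ _ hE.ne'])
  rw [← zero_add (n * log _ - _)]
  refine (htilt.add_const _).congr' ?_
  filter_upwards [eventually_gt_atTop 0] with s hs
  have hs0 : (s : ℝ) ≠ 0 := by exact_mod_cast hs.ne'
  have hA : 0 < (P ^ (s * n)).coeff (s * r) :=
    coeff_pow_pos hP (by rw [mul_assoc]; exact Nat.mul_le_mul_left s hrn.le)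
  rw [coeff_tilt_pow, log_div (by positivity) (by positivity), log_mul hA.ne' (by positivity),
    log_pow, log_pow]
  push_cast
  field_simp
  ring

lemma tendsto_mul_eval_derivative_div_eval_atTop (P : ℝ[X]) :
    Tendsto (fun q => q * (derivative P).eval q / P.eval q) atTop (nhds P.natDegree) := by
  rcases eq_or_ne P.natDegree 0 with h0 | h0
  · simp [derivative_of_natDegree_zero h0, h0]
  · have hP : P ≠ 0 := by rintro rfl; simp at h0
    have hdeg : (X * derivative P).degree = P.degree := by
      rw [degree_mul, degree_X, degree_derivative h0, degree_eq_natDegree hP]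
      norm_cast
      lia
    have h := div_tendsto_atTop_leadingCoeff_div_of_degree_eq _ _ hdeg
    rw [leadingCoeff_mul, leadingCoeff_X, one_mul, leadingCoeff_derivative,
      mul_div_cancel_left₀ _ (leadingCoeff_ne_zero.2 hP)] at h
    simpa only [eval_mul, eval_X] using h

end Polynomial

section Binomial

theorem tendsto_log_choose {m r : ℕ} (hrm : r ≤ m) :
    Tendsto (fun s : ℕ => 1 / (s : ℝ) * log ((s * m).choose (s * r))) atTop
      (nhds (m * binEntropy (r / m))) := by
  rcases r.eq_zero_or_pos with rfl | hr
  · simp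
  have hr' : (0 : ℝ) < r := by exact_mod_cast hr
  rcases hrm.eq_or_lt with rfl | hrm
  · simp [hr'.ne']
  have hrm' : (r : ℝ) < m := by exact_mod_cast hrm
  have hsub : (0 : ℝ) < m - r := sub_pos.2 hrm'
  have hm : (0 : ℝ) < m := hr'.trans hrm'
  have hdeg : (1 + Polynomial.X : Polynomial ℝ).natDegree = 1 := by
    rw [add_comm, ← Polynomial.C_1, Polynomial.natDegree_X_add_C]
  have h := tendsto_log_coeff_pow (P := 1 + Polynomial.X) (n := m) (q := r / (m - r))
    (fun t ht => by
      rw [hdeg] at ht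
      interval_cases t <;> simp [Polynomial.coeff_one, Polynomial.coeff_X])
    hr (by rwa [hdeg, mul_one]) (by positivity)
    (by
      simp only [Polynomial.derivative_add, Polynomial.derivative_one, Polynomial.derivative_X,
        Polynomial.eval_add, Polynomial.eval_zero, Polynomial.eval_one, Polynomial.eval_X]
      field_simp
      ring)
  convert h using 2
  · rw [Polynomial.coeff_one_add_X_pow]
  · have h1 : 1 + (r : ℝ) / (m - r) = m / (m - r) := by field_simp; ring
    have h2 : 1 - (r : ℝ) / m = (m - r) / m := by field_simp
    simp only [binEntropy, Polynomial.eval_add, Polynomial.eval_one, Polynomial.eval_X, h1, h2,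
      log_inv, log_div hr'.ne' hm.ne', log_div hsub.ne' hm.ne', log_div hm.ne' hsub.ne',
      log_div hr'.ne' hsub.ne']
    field_simp
    ring

end Binomial

section GeomPoly

open Polynomial

/-- The polynomial `1 + X + ⋯ + X ^ k`: the `N`-th power has the numbers `(N choose j)_k` as
coefficients, and its value at `q` is the partition function of the truncated geometric
distribution with ratio `q`. -/
noncomputable def geomPoly (R : Type*) [Semiring R] (k : ℕ) : R[X] := ∑ t ∈ range (k + 1), X ^ t

lemma coeff_geomPoly {R : Type*} [Semiring R] (k t : ℕ) :
    (geomPoly R k).coeff t = if t ≤ k then 1 else 0 := by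
  simp [geomPoly, coeff_X_pow]

lemma natDegree_geomPoly {R : Type*} [Semiring R] [Nontrivial R] (k : ℕ) :
    (geomPoly R k).natDegree = k := by
  refine natDegree_eq_of_le_of_coeff_ne_zero ?_ (by simp [coeff_geomPoly])
  exact natDegree_le_iff_coeff_eq_zero.2 fun t ht => by simp [coeff_geomPoly, ht.not_ge]

lemma coeff_geomPoly_pos {k t : ℕ} (ht : t ≤ (geomPoly ℝ k).natDegree) :
    0 < (geomPoly ℝ k).coeff t := by
  rw [natDegree_geomPoly] at ht
  simp [coeff_geomPoly, ht]

lemma eval_geomPoly (k : ℕ) (q : ℝ) : (geomPoly ℝ k).eval q = ∑ t ∈ range (k + 1), q ^ t :=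
  eval_geom_sum

lemma eval_geomPoly_pos (k : ℕ) {q : ℝ} (hq : 0 ≤ q) : 0 < (geomPoly ℝ k).eval q :=
  eval_pos_of_forall_coeff_pos (fun _ ht => coeff_geomPoly_pos ht) hq

lemma mul_eval_derivative_geomPoly (k : ℕ) (q : ℝ) :
    q * (derivative (geomPoly ℝ k)).eval q = ∑ t ∈ range (k + 1), (t : ℝ) * q ^ t := by
  rw [geomPoly, derivative_sum, eval_finsetSum, mul_sum]
  refine sum_congr rfl fun t _ => ?_
  rw [derivative_X_pow, eval_mul, eval_pow, eval_X, eval_C, mul_left_comm]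
  rcases t with _ | t
  · simp
  · rw [Nat.add_sub_cancel, ← pow_succ']

lemma cast_knomial_coe {R : Type*} [Semiring R] (k N j : ℕ) :
    (knomial k N j : R) = (geomPoly R k ^ N).coeff j := by
  have hmap : geomPoly R k = (geomPoly ℕ k).map (Nat.castRingHom R) := by
    simp [geomPoly, Polynomial.map_sum]
  rw [hmap, ← Polynomial.map_pow, coeff_map]
  simp [knomial, geomPoly]

lemma knomial_coe_zero_right (k N : ℕ) : knomial k N 0 = 1 := by
  rw [← Nat.cast_id (knomial k N 0), cast_knomial_coe, coeff_zero_eq_eval_zero, eval_pow,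
    ← coeff_zero_eq_eval_zero, coeff_geomPoly, if_pos k.zero_le, one_pow]

lemma knomial_coe_mul_self (k N : ℕ) : knomial k N (N * k) = 1 := by
  rw [← Nat.cast_id (knomial k N (N * k)), cast_knomial_coe,
    coeff_pow_of_natDegree_le (natDegree_geomPoly k).le, coeff_geomPoly, if_pos le_rfl, one_pow]

end GeomPoly

section TruncatedGeometric

open Polynomial

lemma mul_log_mul_pow (p q : ℝ) (t : ℕ) :
    p * q ^ t * log (p * q ^ t) = log p * (p * q ^ t) + log q * (t * (p * q ^ t)) := by
  rcases eq_or_ne (p * q ^ t) 0 with h | h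
  · simp [h]
  · rw [log_mul (left_ne_zero_of_mul h) (right_ne_zero_of_mul h), log_pow]
    ring

lemma Hmax_eq_of_hasSum {κ : ℕ∞} {x : ℝ} (hmass : HasSum (tgPMF κ x) 1)
    (hmean : HasSum (fun t : ℕ => t * tgPMF κ x t) x) :
    Hmax κ x = -log (tgP κ x) - x * log (tgQ κ x) := by
  have hterm (t : ℕ) : log (tgP κ x) * tgPMF κ x t + log (tgQ κ x) * (t * tgPMF κ x t) =
      tgPMF κ x t * log (tgPMF κ x t) := by
    unfold tgPMF
    split_ifs
    · rw [mul_log_mul_pow]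
    · simp
  have h := (hmass.mul_left (log (tgP κ x))).add (hmean.mul_left (log (tgQ κ x)))
  simp only [hterm] at h
  rw [Hmax, h.tsum_eq]
  ring

lemma Hmax_eq_zero_of_tgQ_eq_zero {κ : ℕ∞} {x : ℝ} (h : tgQ κ x = 0) : Hmax κ x = 0 := by
  have hp : tgP κ x = 1 := by
    unfold tgP
    split_ifs
    · simp [h]
    · simp [h, sum_range_succ']
  have hterm (t : ℕ) : tgPMF κ x t * log (tgPMF κ x t) = 0 := by
    unfold tgPMF
    split_ifs
    · rw [mul_log_mul_pow, h, hp, log_one, log_zero, zero_mul, zero_mul, add_zero]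
    · simp
  simp [Hmax, hterm]

section Finite

variable {k : ℕ} {x : ℝ}

lemma tgMean_coe (k : ℕ) (q : ℝ) :
    tgMean k q = q * (derivative (geomPoly ℝ k)).eval q / (geomPoly ℝ k).eval q := by
  simp [tgMean, mul_eval_derivative_geomPoly, eval_geomPoly]

lemma tgP_coe (k : ℕ) (x : ℝ) : tgP k x = ((geomPoly ℝ k).eval (tgQ k x))⁻¹ := by
  simp [tgP, eval_geomPoly]

lemma tgMean_coe_lt (hk : 0 < k) {q : ℝ} (hq : 0 ≤ q) : tgMean k q < k := by
  rw [tgMean_coe, div_lt_iff₀ (eval_geomPoly_pos k hq), mul_eval_derivative_geomPoly,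
    eval_geomPoly, mul_sum]
  refine sum_lt_sum (fun t ht => ?_) ⟨0, by simp, by simpa using hk⟩
  gcongr
  exact mem_range_succ_iff.1 ht

lemma exists_le_tgMean (hxk : x < k) : ∃ q : ℝ, 0 ≤ q ∧ x ≤ tgMean k q := by
  have hlim : Tendsto (tgMean k) atTop (nhds k) := by
    rw [funext (tgMean_coe k)]
    simpa only [natDegree_geomPoly] using tendsto_mul_eval_derivative_div_eval_atTop (geomPoly ℝ k)
  exact ((eventually_ge_atTop 0).and (hlim.eventually_const_le hxk)).exists

lemma continuousOn_tgMean (k : ℕ) : ContinuousOn (tgMean k) (Set.Ici 0) := by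
  rw [funext (tgMean_coe k)]
  exact ContinuousOn.div (by fun_prop) (by fun_prop) fun q hq => (eval_geomPoly_pos k hq).ne'

lemma tgMean_coe_zero (k : ℕ) : tgMean k 0 = 0 := by simp [tgMean_coe]

lemma tgQ_nonneg (κ : ℕ∞) (x : ℝ) : 0 ≤ tgQ κ x := Real.sInf_nonneg fun _ hq => hq.1

lemma tgMean_tgQ (hx : 0 ≤ x) (hxk : x < k) : tgMean k (tgQ k x) = x := by
  have hbdd : BddBelow {q : ℝ | 0 ≤ q ∧ x ≤ tgMean k q} := ⟨0, fun q hq => hq.1⟩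
  have hclosed : IsClosed {q : ℝ | 0 ≤ q ∧ x ≤ tgMean k q} :=
    (continuousOn_tgMean k).preimage_isClosed_of_isClosed isClosed_Ici isClosed_Ici
  obtain ⟨h0, hle⟩ : 0 ≤ tgQ k x ∧ x ≤ tgMean k (tgQ k x) :=
    hclosed.csInf_mem (exists_le_tgMean hxk) hbdd
  obtain ⟨q, ⟨hq0, hq⟩, hqx⟩ := intermediate_value_Icc h0
    ((continuousOn_tgMean k).mono Set.Icc_subset_Ici_self) ⟨(tgMean_coe_zero k).trans_le hx, hle⟩
  have hqmin : tgQ k x ≤ q := csInf_le hbdd ⟨hq0, hqx.ge⟩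
  rwa [le_antisymm hqmin hq]

lemma tgQ_pos (hx : 0 < x) (hxk : x < k) : 0 < tgQ k x := by
  refine (tgQ_nonneg k x).lt_of_ne' fun h => hx.ne ?_
  rw [← tgMean_tgQ hx.le hxk, h, tgMean_coe_zero]

lemma tgQ_coe_zero (k : ℕ) : tgQ k 0 = 0 :=
  IsLeast.csInf_eq ⟨⟨le_rfl, (tgMean_coe_zero k).ge⟩, fun _ hq => hq.1⟩

-- No ratio has mean `k`, so `tgQ k k = sInf ∅`.
lemma tgQ_coe_self (hk : 0 < k) : tgQ k k = 0 := by
  have hempty : {q : ℝ | 0 ≤ q ∧ (k : ℝ) ≤ tgMean k q} = ∅ :=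
    Set.eq_empty_of_forall_notMem fun q hq => (tgMean_coe_lt hk hq.1).not_ge hq.2
  rw [tgQ, hempty, Real.sInf_empty]

lemma hasSum_mul_tgPMF_coe (f : ℕ → ℝ) (k : ℕ) (x : ℝ) :
    HasSum (fun t => f t * tgPMF k x t)
      ((∑ t ∈ range (k + 1), f t * tgQ k x ^ t) / (geomPoly ℝ k).eval (tgQ k x)) := by
  have hsum : ∑ t ∈ range (k + 1), f t * tgPMF k x t =
      (∑ t ∈ range (k + 1), f t * tgQ k x ^ t) / (geomPoly ℝ k).eval (tgQ k x) := by
    rw [sum_div]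
    refine sum_congr rfl fun t ht => ?_
    rw [tgPMF, if_pos (by exact_mod_cast mem_range_succ_iff.1 ht), tgP_coe]
    ring
  rw [← hsum]
  refine hasSum_sum_of_ne_finset_zero fun t ht => ?_
  rw [tgPMF, if_neg (by simpa [Nat.lt_succ_iff] using ht), mul_zero]

lemma Hmax_coe (hx : 0 ≤ x) (hxk : x < k) :
    Hmax k x = log ((geomPoly ℝ k).eval (tgQ k x)) - x * log (tgQ k x) := by
  have hZ := eval_geomPoly_pos k (tgQ_nonneg k x)
  have hmass : HasSum (tgPMF k x) 1 := by
    simpa [← eval_geomPoly, hZ.ne'] using hasSum_mul_tgPMF_coe (fun _ => 1) k x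
  have hmean : HasSum (fun t : ℕ => t * tgPMF k x t) x := by
    simpa only [← mul_eval_derivative_geomPoly, ← tgMean_coe, tgMean_tgQ hx hxk] using
      hasSum_mul_tgPMF_coe (fun t => t) k x
  rw [Hmax_eq_of_hasSum hmass hmean, tgP_coe, log_inv, neg_neg]

end Finite

section Unbounded

variable {x : ℝ}

lemma tgQ_top (hx : 0 ≤ x) : tgQ ⊤ x = x / (1 + x) := by
  refine IsLeast.csInf_eq ⟨⟨by positivity, ?_⟩, ?_⟩
  · have h1 : 1 - x / (1 + x) = 1 / (1 + x) := by field_simp; ring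
    rw [tgMean, if_pos rfl, h1]
    field_simp
    exact le_rfl
  · rintro q ⟨-, hle⟩
    rw [tgMean, if_pos rfl] at hle
    rcases le_or_gt 1 q with hq1 | hq1
    · exact (div_le_one_of_le₀ (by linarith) (by positivity)).trans hq1
    · rw [le_div_iff₀ (sub_pos.2 hq1)] at hle
      rw [div_le_iff₀ (by positivity)]
      linarith

lemma tgP_top (hx : 0 ≤ x) : tgP ⊤ x = (1 + x)⁻¹ := by
  rw [tgP, if_pos rfl, tgQ_top hx]
  field_simp
  ring

lemma tgPMF_top (hx : 0 ≤ x) (t : ℕ) : tgPMF ⊤ x t = (1 + x)⁻¹ * (x / (1 + x)) ^ t := by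
  rw [tgPMF, if_pos le_top, tgP_top hx, tgQ_top hx]

lemma Hmax_top (hx : 0 ≤ x) : Hmax ⊤ x = (1 + x) * binEntropy (x / (1 + x)) := by
  have hx1 : 0 < 1 + x := by positivity
  have hcompl : 1 - x / (1 + x) = (1 + x)⁻¹ := by field_simp; ring
  have hq0 : 0 ≤ x / (1 + x) := by positivity
  have hq1 : x / (1 + x) < 1 := (div_lt_one hx1).2 (by linarith)
  have hmass : HasSum (tgPMF ⊤ x) 1 := by
    have h := (hasSum_geometric_of_lt_one hq0 hq1).mul_left (1 + x)⁻¹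
    rw [hcompl, inv_inv, inv_mul_cancel₀ hx1.ne'] at h
    simpa only [← tgPMF_top hx] using h
  have hmean : HasSum (fun t : ℕ => t * tgPMF ⊤ x t) x := by
    have h := (hasSum_coe_mul_geometric_of_norm_lt_one
      (by rwa [norm_of_nonneg hq0])).mul_left (1 + x)⁻¹
    have hval : (1 + x)⁻¹ * (x / (1 + x) / (1 - x / (1 + x)) ^ 2) = x := by
      rw [hcompl]; field_simp
    rw [hval] at h
    simpa only [tgPMF_top hx, mul_left_comm] using h
  rw [Hmax_eq_of_hasSum hmass hmean, tgP_top hx, tgQ_top hx, binEntropy, hcompl]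
  simp only [log_inv, inv_inv]
  field_simp
  ring

end Unbounded

end TruncatedGeometric

lemma add_mul_knomial_top (N j : ℕ) : (N + j) * knomial ⊤ N j = N * (N + j).choose j := by
  rcases N.eq_zero_or_pos with rfl | hN
  · rcases j with _ | j <;> simp [knomial]
  · have h := Nat.choose_mul_succ_eq (j + N - 1) j
    rw [Nat.sub_add_cancel (by lia), Nat.add_sub_cancel_left] at h
    rw [knomial, if_pos rfl, add_comm N j, mul_comm, h, mul_comm]

lemma cast_knomial_top {N : ℕ} (hN : 0 < N) (j : ℕ) :
    (knomial ⊤ N j : ℝ) = (N + j).choose j * (N / (N + j : ℕ)) := by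
  have hNj : ((N + j : ℕ) : ℝ) ≠ 0 := by positivity
  rw [← mul_div_assoc, eq_div_iff hNj, mul_comm, mul_comm (Nat.cast (Nat.choose _ _))]
  exact_mod_cast add_mul_knomial_top N j

theorem tendsto_log_knomial_top {n : ℕ} (hn : 0 < n) (r : ℕ) :
    Tendsto (fun s : ℕ => 1 / (s : ℝ) * log (knomial ⊤ (s * n) (s * r))) atTop
      (nhds (n * Hmax ⊤ (r / n))) := by
  have hn' : (0 : ℝ) < n := by exact_mod_cast hn
  have hlim : (n : ℝ) * Hmax ⊤ (r / n) =
      (n + r : ℕ) * binEntropy (r / (n + r : ℕ)) + 0 * log (n / (n + r : ℕ)) := by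
    have hx : (r : ℝ) / n / (1 + r / n) = r / (n + r : ℕ) := by push_cast; field_simp
    rw [Hmax_top (div_nonneg r.cast_nonneg hn'.le), hx, zero_mul, add_zero, ← mul_assoc]
    push_cast
    field_simp
  rw [hlim]
  refine ((tendsto_log_choose (Nat.le_add_left r n)).add
    (tendsto_one_div_atTop_nhds_zero_nat.mul_const _)).congr' ?_
  filter_upwards [eventually_gt_atTop 0] with s hs
  have hs' : (0 : ℝ) < s := by exact_mod_cast hs
  have hchoose : (0 : ℝ) < (s * (n + r)).choose (s * r) := by
    exact_mod_cast Nat.choose_pos (Nat.mul_le_mul_left s (Nat.le_add_left r n))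
  have hratio : (knomial ⊤ (s * n) (s * r) : ℝ) =
      (s * (n + r)).choose (s * r) * (n / (n + r : ℕ)) := by
    rw [cast_knomial_top (Nat.mul_pos hs hn), ← mul_add, Nat.cast_mul, Nat.cast_mul,
      mul_div_mul_left _ _ hs'.ne']
  rw [hratio, log_mul hchoose.ne' (by positivity)]
  ring

theorem tendsto_log_knomial_coe {k n r : ℕ} (hr : r ≤ n * k) :
    Tendsto (fun s : ℕ => 1 / (s : ℝ) * log (knomial k (s * n) (s * r))) atTop
      (nhds (n * Hmax k (r / n))) := by
  rcases r.eq_zero_or_pos with rfl | hr0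
  · have hH : Hmax k 0 = 0 := Hmax_eq_zero_of_tgQ_eq_zero (tgQ_coe_zero k)
    simp [hH, knomial_coe_zero_right]
  have hnk : 0 < n * k := hr0.trans_le hr
  have hn : (0 : ℝ) < n := by exact_mod_cast Nat.pos_of_mul_pos_right hnk
  rcases hr.eq_or_lt with rfl | hrk
  · have hH : Hmax k k = 0 :=
      Hmax_eq_zero_of_tgQ_eq_zero (tgQ_coe_self (Nat.pos_of_mul_pos_left hnk))
    simp [hH, hn.ne', ← mul_assoc, knomial_coe_mul_self]
  · have hx : (0 : ℝ) < r / n := by positivity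
    have hxk : (r : ℝ) / n < k := by rw [div_lt_iff₀' hn]; exact_mod_cast hrk
    have hmean := tgMean_tgQ hx.le hxk
    rw [tgMean_coe, div_eq_iff (eval_geomPoly_pos k (tgQ_nonneg k _)).ne'] at hmean
    have h := tendsto_log_coeff_pow (fun t ht => coeff_geomPoly_pos ht) hr0
      (by rwa [natDegree_geomPoly]) (tgQ_pos hx hxk) (by rw [hmean]; field_simp)
    rw [Hmax_coe hx.le hxk, mul_sub, ← mul_assoc, mul_div_cancel₀ _ hn.ne']
    simpa only [cast_knomial_coe] using h

/-- **Lemma.** `lim_{s→∞} (1/s) ln (sn choose sr)_κ = n H^max_κ(r/n)`. -/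
theorem knomial_cloning_entropy_limit (κ : ℕ∞) (hκ : 1 ≤ κ) (n r : ℕ) (hn : 0 < n)
    (hr : (r : ℕ∞) ≤ (n : ℕ∞) * κ) :
    Filter.Tendsto (fun s : ℕ => (1 / (s : ℝ)) * Real.log (knomial κ (s * n) (s * r)))
      Filter.atTop (nhds ((n : ℝ) * Hmax κ ((r : ℝ) / n))) := by
  induction κ using ENat.recTopCoe with
  | top => exact tendsto_log_knomial_top hn r
  | coe k => exact tendsto_log_knomial_coe (by exact_mod_cast hr)
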